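/- Let κ be a contraction and μ₁, μ₂ mergers between nested graphs such that the composite μ₂ ∘ μ₁ ∘ κ is defined. Then (μ₂ ∘ μ₁) ∘ κ = μ₂ ∘ (μ₁ ∘ κ) as morphisms of the category NGr of nested graphs; that is, the canonical merger–contraction decomposition of the admissible epi-functor (μ₂ ∘ μ₁) ∘ κ coincides with the decomposition obtained by first canonically decomposing μ₁ ∘ κ as κ'' ∘ μ₁' and then canonically decomposing μ₂ ∘ κ''. -/

import Mathlib

open CategoryTheory

universe v u

/-- A morphism in a category is an identity morphism (up to `eqToHom`). -/
def IsId {C : Type u} [Category.{v} C] {A B : C} (f : A ⟶ B) : Prop :=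
  ∃ h : A = B, f = eqToHom h

/-- A flag in a nested graph is a non-identity morphism. -/
def IsFlag {C : Type u} [Category.{v} C] {A B : C} (f : A ⟶ B) : Prop :=
  ¬ IsId f

/-- An irreducible flag is a flag that cannot be written as the composite of two flags. -/
def IsIrred {C : Type u} [Category.{v} C] {A B : C} (f : A ⟶ B) : Prop :=
  IsFlag f ∧ ¬ ∃ (X : C) (g : A ⟶ X) (h : X ⟶ B), IsFlag g ∧ IsFlag h ∧ g ≫ h = f

/-- A grading: a functor to the finite ordinal `Fin n` (viewed as a preorder category)
sending every non-identity morphism to a non-identity morphism. -/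
def IsGrading {C : Type u} [Category.{v} C] {n : ℕ} (G : C ⥤ Fin n) : Prop :=
  ∀ ⦃A B : C⦄ (f : A ⟶ B), IsFlag f → IsFlag (G.map f)

/-- A nested graph: a category admitting a grading into some finite ordinal. -/
def IsNestedGraph (C : Type u) [Category.{v} C] : Prop :=
  ∃ (n : ℕ) (G : C ⥤ Fin n), IsGrading G

/-- A functor `φ` contracts a flag `f` if `φ.map f` is an identity. -/
def Contracts {C D : Type u} [Category.{v} C] [Category.{v} D]
    (φ : C ⥤ D) {A B : C} (f : A ⟶ B) : Prop :=
  IsId (φ.map f)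

/-- An admissible functor: it maps irreducible flags to identities or irreducible flags,
and whenever it contracts an irreducible flag with domain `A`, it contracts every
irreducible flag with domain `A`. -/
def IsAdmissible {C D : Type u} [Category.{v} C] [Category.{v} D] (φ : C ⥤ D) : Prop :=
  (∀ ⦃A B : C⦄ (f : A ⟶ B), IsIrred f → IsId (φ.map f) ∨ IsIrred (φ.map f)) ∧
  (∀ ⦃A B B' : C⦄ (f : A ⟶ B) (g : A ⟶ B'), IsIrred f → IsIrred g →
      Contracts φ f → Contracts φ g)

/-- The morphisms of the codomain generated by the image of a functor. -/
inductive GenBy {C D : Type u} [Category.{v} C] [Category.{v} D] (φ : C ⥤ D) :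
    ∀ {X Y : D}, (X ⟶ Y) → Prop
  | id (X : D) : GenBy φ (𝟙 X)
  | map {A B : C} (f : A ⟶ B) : GenBy φ (φ.map f)
  | comp {X Y Z : D} (f : X ⟶ Y) (g : Y ⟶ Z) :
      GenBy φ f → GenBy φ g → GenBy φ (f ≫ g)

/-- An epi-functor: its image generates the codomain. -/
def IsEpiFunctor {C D : Type u} [Category.{v} C] [Category.{v} D] (φ : C ⥤ D) : Prop :=
  Function.Surjective φ.obj ∧ ∀ ⦃X Y : D⦄ (f : X ⟶ Y), GenBy φ f

/-- `μ : C ⥤ D` exhibits `D` as the quotient of `C` identifying `r`-related objects,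
with morphisms freely generated by the morphisms of `C` subject to the composition
relations of `C` (expressed via the universal property). -/
def IsQuotientBy {C D : Type u} [Category.{v} C] [Category.{v} D]
    (r : C → C → Prop) (μ : C ⥤ D) : Prop :=
  (∀ A B : C, μ.obj A = μ.obj B ↔ Relation.EqvGen r A B) ∧
  Function.Surjective μ.obj ∧
  (∀ ⦃X Y : D⦄ (f : X ⟶ Y), GenBy μ f) ∧
  (∀ (E : Type u) [Category.{v} E] (F : C ⥤ E),
      (∀ A B : C, r A B → F.obj A = F.obj B) → ∃! F' : D ⥤ E, μ ⋙ F' = F)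

/-- A merger: an admissible epi-functor exhibiting its codomain as the quotient of its
domain by an equivalence relation on objects, with morphisms freely generated subject to
the composition relations of the domain. -/
def IsMerger {C D : Type u} [Category.{v} C] [Category.{v} D] (μ : C ⥤ D) : Prop :=
  IsAdmissible μ ∧ IsEpiFunctor μ ∧
    ∃ r : C → C → Prop, Equivalence r ∧ IsQuotientBy r μ

/-- `A` is a vertex of its fiber under `φ`: it is not the domain of any flag
contracted by `φ`. -/
def IsVertexOver {C D : Type u} [Category.{v} C] [Category.{v} D]
    (φ : C ⥤ D) (A : C) : Prop :=
  ∀ ⦃B : C⦄ (f : A ⟶ B), Contracts φ f → IsId f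

/-- `A₁` is a vertex of the fiber of `φ` over `A₂`. -/
def IsFiberVertex {C D : Type u} [Category.{v} C] [Category.{v} D]
    (φ : C ⥤ D) (A₂ : D) (A₁ : C) : Prop :=
  φ.obj A₁ = A₂ ∧ IsVertexOver φ A₁

/-- A contraction: an admissible epi-functor each of whose fibers is a corolla,
i.e. has a unique vertex. -/
def IsContraction {C D : Type u} [Category.{v} C] [Category.{v} D] (κ : C ⥤ D) : Prop :=
  IsAdmissible κ ∧ IsEpiFunctor κ ∧ ∀ A₂ : D, ∃! A₁ : C, IsFiberVertex κ A₂ A₁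

/-- The canonical merger relation of `φ`: it relates distinct objects `A ≠ B` exactly when
`φ A = φ B` and both `A` and `B` are vertices of the fiber of `φ` over `φ A`. -/
def mergerRel {C D : Type u} [Category.{v} C] [Category.{v} D] (φ : C ⥤ D) :
    C → C → Prop :=
  fun A B => A ≠ B ∧ φ.obj A = φ.obj B ∧ IsVertexOver φ A ∧ IsVertexOver φ B

/-- A canonical merger–contraction decomposition of `φ`: the merger part is the quotient
of the domain identifying, within each fiber of `φ`, all objects that are vertices of that
fiber. -/
def IsCanonicalDecomp {C P D : Type u} [Category.{v} C] [Category.{v} P] [Category.{v} D]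
    (φ : C ⥤ D) (μ : C ⥤ P) (κ : P ⥤ D) : Prop :=
  IsQuotientBy (mergerRel φ) μ ∧ μ ⋙ κ = φ

/-- Two merger–contraction pairs are equal as morphisms of nested graphs: one is obtained
from the other by shifting an isomorphism from the merger to the contraction. -/
def PairEquiv {A B P P' : Type u} [Category.{v} A] [Category.{v} B]
    [Category.{v} P] [Category.{v} P']
    (μ : A ⥤ P) (κ : P ⥤ B) (μ' : A ⥤ P') (κ' : P' ⥤ B) : Prop :=
  ∃ (e : P ⥤ P') (e' : P' ⥤ P), e ⋙ e' = 𝟭 P ∧ e' ⋙ e = 𝟭 P' ∧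
    μ ⋙ e = μ' ∧ e ⋙ κ' = κ

/-- A category contains no cycle of flags. -/
def NoFlagCycles (C : Type u) [Category.{v} C] : Prop :=
  ∀ (k : ℕ), 0 < k → ∀ (obj : Fin (k + 1) → C)
    (flag : ∀ i : Fin k, obj i.castSucc ⟶ obj i.succ),
    (∀ i, IsFlag (flag i)) → obj 0 ≠ obj (Fin.last k)

/-!
Suppose `φ` has the canonical decomposition `μ ⋙ κ`, and `ψ` contracts no flag. Then for an object
`A` it is equivalent to be a vertex of its fiber under `φ`, to be one under `φ ⋙ ψ`, and to have an
image `μ A` that is one under `κ ⋙ ψ`: a flag of the quotient contracted by `κ` is a composite of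
images of flags contracted by `φ`. Hence merging the fiber vertices of `φ` and then those of `κ ⋙ ψ`
identifies the same objects as merging the fiber vertices of `φ ⋙ ψ`, and a canonical
decomposition is determined up to isomorphism by the objects its merger identifies.

A merger contracts no flag: sending identities to `1` and flags to `0` is a functor to a one-object
category, so it factors through every quotient on objects.
-/

attribute [local instance] uliftCategory

section Identities

theorem IsId.map {C D : Type*} [Category C] [Category D] {A B : C} {f : A ⟶ B} (hf : IsId f)
    (F : C ⥤ D) : IsId (F.map f) := by
  obtain ⟨rfl, rfl⟩ := hf
  exact ⟨rfl, by simp⟩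

theorem IsId.comp {C : Type*} [Category C] {A B X : C} {f : A ⟶ B} {g : B ⟶ X} (hf : IsId f)
    (hg : IsId g) : IsId (f ≫ g) := by
  obtain ⟨rfl, rfl⟩ := hf
  obtain ⟨rfl, rfl⟩ := hg
  exact ⟨rfl, by simp⟩

variable {C D E : Type u} [Category.{v} C] [Category.{v} D] [Category.{v} E]

/-- A category in which identities factor only through identities, as in a nested graph. A functor
to such a category that contracts a composite contracts both factors. -/
def IdentitiesIndecomposable (C : Type u) [Category.{v} C] : Prop :=
  ∀ ⦃A B X : C⦄ (f : A ⟶ B) (g : B ⟶ X), IsId (f ≫ g) → IsId f ∧ IsId g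

/-- A functor contracting no flag, such as a merger of nested graphs. Composing with it does not
change which objects are fiber vertices. -/
def ReflectsIdentities (ψ : C ⥤ D) : Prop :=
  ∀ ⦃A B : C⦄ (f : A ⟶ B), Contracts ψ f → IsId f

theorem IdentitiesIndecomposable.isId_comp_iff (hC : IdentitiesIndecomposable C) {A B X : C}
    {f : A ⟶ B} {g : B ⟶ X} : IsId (f ≫ g) ↔ IsId f ∧ IsId g :=
  ⟨hC f g, fun h => h.1.comp h.2⟩

theorem IsGrading.isId_of_obj_eq {n : ℕ} {G : C ⥤ Fin n} (hG : IsGrading G) {A B : C}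
    (f : A ⟶ B) (h : G.obj A = G.obj B) : IsId f := by
  by_contra hf
  exact hG f hf ⟨h, Subsingleton.elim _ _⟩

theorem IsNestedGraph.identitiesIndecomposable (hC : IsNestedGraph C) :
    IdentitiesIndecomposable C := by
  obtain ⟨n, G, hG⟩ := hC
  rintro A B X f g ⟨rfl, -⟩
  have hAB : G.obj A = G.obj B := le_antisymm (leOfHom (G.map f)) (leOfHom (G.map g))
  exact ⟨hG.isId_of_obj_eq f hAB, hG.isId_of_obj_eq g hAB.symm⟩

theorem ReflectsIdentities.isVertexOver_comp_iff {ψ : D ⥤ E} (hψ : ReflectsIdentities ψ)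
    {φ : C ⥤ D} {A : C} : IsVertexOver (φ ⋙ ψ) A ↔ IsVertexOver φ A :=
  ⟨fun h _ f hf => h f (hf.map ψ), fun h _ f hf => h f (hψ _ hf)⟩

open Classical in
/-- The indicator of the identities of `C`, as a functor to the multiplicative monoid `ℕ` viewed as
a one-object category. The `ULift`s place it in the universes over which `IsQuotientBy`
quantifies. -/
noncomputable def identityIndicator (hC : IdentitiesIndecomposable C) :
    C ⥤ ULift.{u} (SingleObj (ULift.{v} ℕ)) where
  obj _ := ⟨SingleObj.star _⟩
  map f := ⟨if IsId f then 1 else 0⟩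
  map_id A := by
    have hA : IsId (𝟙 A) := ⟨rfl, rfl⟩
    simp only [if_pos hA]
    rfl
  map_comp f g := by
    refine ULift.ext _ _ ?_
    change (if IsId (f ≫ g) then 1 else 0) = (if IsId g then 1 else 0) * (if IsId f then 1 else 0)
    simp only [hC.isId_comp_iff, and_comm (a := IsId f), ite_and, ite_mul, one_mul, zero_mul]

theorem reflectsIdentities_identityIndicator (hC : IdentitiesIndecomposable C) :
    ReflectsIdentities (identityIndicator hC) := by
  classical
  rintro A B f ⟨_, hf⟩
  by_contra hf'
  have h : (if IsId f then 1 else 0) = 1 :=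
    congrArg (fun x : ULift.{v} ℕ => x.down) hf
  simp [hf'] at h

end Identities

section Quotient

variable {C D E : Type u} [Category.{v} C] [Category.{v} D] [Category.{v} E]
  {r : C → C → Prop} {μ : C ⥤ D}

theorem GenBy.functor_map {X Y : D} {f : X ⟶ Y} (hf : GenBy μ f) (ν : D ⥤ E) :
    GenBy (μ ⋙ ν) (ν.map f) := by
  induction hf with
  | id X => simpa only [ν.map_id] using GenBy.id (ν.obj X)
  | map f => exact GenBy.map (φ := μ ⋙ ν) f
  | comp f g _ _ hf hg => simpa only [ν.map_comp] using hf.comp _ _ hg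

theorem GenBy.trans {ν : D ⥤ E} {X Y : E} {g : X ⟶ Y} (hg : GenBy ν g)
    (hμ : ∀ ⦃X Y : D⦄ (f : X ⟶ Y), GenBy μ f) : GenBy (μ ⋙ ν) g := by
  induction hg with
  | id X => exact .id X
  | map f => exact (hμ f).functor_map ν
  | comp f g _ _ hf hg => exact hf.comp _ _ hg

namespace IsQuotientBy

theorem obj_eq (hμ : IsQuotientBy r μ) {A B : C} (h : r A B) : μ.obj A = μ.obj B :=
  (hμ.1 A B).2 (.rel _ _ h)

theorem exists_comp_eq (hμ : IsQuotientBy r μ) (F : C ⥤ E)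
    (hF : ∀ A B, r A B → F.obj A = F.obj B) : ∃ F' : D ⥤ E, μ ⋙ F' = F :=
  (hμ.2.2.2 E F hF).exists

theorem functor_ext (hμ : IsQuotientBy r μ) {F F' : D ⥤ E} (h : μ ⋙ F = μ ⋙ F') : F = F' :=
  (hμ.2.2.2 E (μ ⋙ F') fun _ _ hAB => congrArg F'.obj (hμ.obj_eq hAB)).unique h rfl

theorem reflectsIdentities (hμ : IsQuotientBy r μ) (hC : IdentitiesIndecomposable C) :
    ReflectsIdentities μ := by
  intro A B f hf
  obtain ⟨F, hF⟩ := hμ.exists_comp_eq (identityIndicator hC) fun _ _ _ => rfl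
  apply reflectsIdentities_identityIndicator hC
  rw [← hF]
  exact hf.map F

theorem comp {s : D → D → Prop} {t : C → C → Prop} {ν : D ⥤ E} (hμ : IsQuotientBy r μ)
    (hν : IsQuotientBy s ν)
    (ht : ∀ A B, Relation.EqvGen t A B ↔ Relation.EqvGen s (μ.obj A) (μ.obj B)) :
    IsQuotientBy t (μ ⋙ ν) := by
  refine ⟨fun A B => (hν.1 _ _).trans (ht A B).symm, hν.2.1.comp hμ.2.1,
    fun _ _ g => (hν.2.2.1 g).trans hμ.2.2.1, fun E' _ F hF => ?_⟩
  have hF_eqv : ∀ A B, Relation.EqvGen s (μ.obj A) (μ.obj B) → F.obj A = F.obj B := by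
    intro A B h
    exact (eq_equivalence.comap F.obj).eqvGen_iff.1 (((ht A B).2 h).mono hF)
  obtain ⟨F₁, hF₁⟩ := hμ.exists_comp_eq F fun A B h =>
    hF_eqv A B (hμ.obj_eq h ▸ .refl _)
  have hF₁_obj : ∀ X Y, s X Y → F₁.obj X = F₁.obj Y := by
    intro X Y h
    obtain ⟨A, rfl⟩ := hμ.2.1 X
    obtain ⟨B, rfl⟩ := hμ.2.1 Y
    have hAB : F.obj A = F.obj B := hF_eqv A B (.rel _ _ h)
    rwa [← hF₁] at hAB
  obtain ⟨F₂, hF₂⟩ := hν.exists_comp_eq F₁ hF₁_obj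
  refine ⟨F₂, (congrArg (μ ⋙ ·) hF₂).trans hF₁, fun F' hF' => ?_⟩
  apply hν.functor_ext
  apply hμ.functor_ext
  rw [hF₂, hF₁, ← Functor.assoc, hF']

theorem exists_iso {μ' : C ⥤ E} (hμ : IsQuotientBy r μ) (hμ' : IsQuotientBy r μ') :
    ∃ (e : D ⥤ E) (e' : E ⥤ D), e ⋙ e' = 𝟭 D ∧ e' ⋙ e = 𝟭 E ∧ μ ⋙ e = μ' := by
  obtain ⟨e, he⟩ := hμ.exists_comp_eq μ' fun _ _ => hμ'.obj_eq
  obtain ⟨e', he'⟩ := hμ'.exists_comp_eq μ fun _ _ => hμ.obj_eq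
  refine ⟨e, e', hμ.functor_ext ?_, hμ'.functor_ext ?_, he⟩
  · rw [← Functor.assoc, he, he', Functor.comp_id]
  · rw [← Functor.assoc, he', he, Functor.comp_id]

end IsQuotientBy

theorem IsMerger.reflectsIdentities (hμ : IsMerger μ) (hC : IdentitiesIndecomposable C) :
    ReflectsIdentities μ := by
  obtain ⟨-, -, r, -, hr⟩ := hμ
  exact hr.reflectsIdentities hC

end Quotient

section CanonicalDecomp

variable {C P D E : Type u} [Category.{v} C] [Category.{v} P] [Category.{v} D] [Category.{v} E]
  {φ : C ⥤ D} {μ : C ⥤ P} {κ : P ⥤ D}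

theorem eqvGen_mergerRel_iff {A B : C} :
    Relation.EqvGen (mergerRel φ) A B ↔
      A = B ∨ φ.obj A = φ.obj B ∧ IsVertexOver φ A ∧ IsVertexOver φ B := by
  constructor
  · intro h
    induction h with
    | rel _ _ h => exact .inr h.2
    | refl => exact .inl rfl
    | symm _ _ _ ih => exact ih.imp Eq.symm fun ⟨h, hA, hB⟩ => ⟨h.symm, hB, hA⟩
    | trans _ _ _ _ _ ih ih' =>
      rcases ih with rfl | ⟨h, hA, hB⟩
      · exact ih'
      · rcases ih' with rfl | ⟨h', -, hB'⟩
        · exact .inr ⟨h, hA, hB⟩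
        · exact .inr ⟨h.trans h', hA, hB'⟩
  · intro h
    by_cases hAB : A = B
    · exact hAB ▸ .refl _
    · exact .rel _ _ ⟨hAB, h.resolve_left hAB⟩

theorem GenBy.isId_of_contracts (hD : IdentitiesIndecomposable D) {X Y : P} {g : X ⟶ Y}
    (hg : GenBy μ g) (hX : ∀ A, μ.obj A = X → IsVertexOver (μ ⋙ κ) A) (hκg : Contracts κ g) :
    IsId g := by
  induction hg with
  | id X => exact ⟨rfl, rfl⟩
  | map f => exact (hX _ rfl f hκg).map μ
  | comp f g _ _ ihf ihg =>
    rw [Contracts, κ.map_comp] at hκg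
    obtain ⟨hκf, hκg⟩ := hD _ _ hκg
    obtain ⟨rfl, hf⟩ := ihf hX hκf
    exact .comp ⟨rfl, hf⟩ (ihg hX hκg)

namespace IsCanonicalDecomp

theorem merger_obj_eq_iff (hd : IsCanonicalDecomp φ μ κ) {A B : C} :
    μ.obj A = μ.obj B ↔ A = B ∨ φ.obj A = φ.obj B ∧ IsVertexOver φ A ∧ IsVertexOver φ B :=
  (hd.1.1 A B).trans eqvGen_mergerRel_iff

theorem isVertexOver_obj_iff (hd : IsCanonicalDecomp φ μ κ) (hC : IdentitiesIndecomposable C)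
    (hD : IdentitiesIndecomposable D) {A : C} :
    IsVertexOver κ (μ.obj A) ↔ IsVertexOver φ A := by
  have merger_obj_eq := @hd.merger_obj_eq_iff
  obtain ⟨hμ, rfl⟩ := hd
  refine ⟨fun h B f hf => hμ.reflectsIdentities hC f (h (μ.map f) hf), fun hA Y g hg => ?_⟩
  refine (hμ.2.2.1 g).isId_of_contracts hD (fun B hB => ?_) hg
  rcases merger_obj_eq.1 hB with rfl | ⟨-, hB, -⟩
  exacts [hA, hB]

theorem comp {Q : Type u} [Category.{v} Q] {ψ : D ⥤ E} {ν : P ⥤ Q} {lam : Q ⥤ E}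
    (hd : IsCanonicalDecomp φ μ κ) (hd' : IsCanonicalDecomp (κ ⋙ ψ) ν lam)
    (hC : IdentitiesIndecomposable C) (hD : IdentitiesIndecomposable D)
    (hψ : ReflectsIdentities ψ) : IsCanonicalDecomp (φ ⋙ ψ) (μ ⋙ ν) lam := by
  refine ⟨hd.1.comp hd'.1 fun A B => ?_, ?_⟩
  · have hobj : ∀ A, (κ ⋙ ψ).obj (μ.obj A) = (φ ⋙ ψ).obj A := fun A =>
      congrArg ψ.obj (Functor.congr_obj hd.2 A)
    rw [eqvGen_mergerRel_iff, eqvGen_mergerRel_iff, hobj, hobj, hd.merger_obj_eq_iff]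
    simp only [hψ.isVertexOver_comp_iff, hd.isVertexOver_obj_iff hC hD]
    have hφψ : φ.obj A = φ.obj B → (φ ⋙ ψ).obj A = (φ ⋙ ψ).obj B := congrArg ψ.obj
    tauto
  · rw [Functor.assoc, hd'.2, ← Functor.assoc, hd.2]

theorem pairEquiv {P' : Type u} [Category.{v} P'] {μ' : C ⥤ P'} {κ' : P' ⥤ D}
    (hd : IsCanonicalDecomp φ μ κ) (hd' : IsCanonicalDecomp φ μ' κ') : PairEquiv μ κ μ' κ' := by
  obtain ⟨e, e', hee', he'e, he⟩ := hd.1.exists_iso hd'.1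
  refine ⟨e, e', hee', he'e, he, hd.1.functor_ext ?_⟩
  rw [← Functor.assoc, he, hd'.2, hd.2]

end IsCanonicalDecomp

end CanonicalDecomp

theorem merger_merger_contraction_assoc_general {M N N' P Q R : Type u}
    [Category.{v} M] [Category.{v} N] [Category.{v} N']
    [Category.{v} P] [Category.{v} Q] [Category.{v} R]
    (hM : IdentitiesIndecomposable M) (hN : IdentitiesIndecomposable N)
    {φ : M ⥤ N} {ψ : N ⥤ N'} (hψ : ReflectsIdentities ψ)
    {μ : M ⥤ P} {κ : P ⥤ N} (hd₁ : IsCanonicalDecomp φ μ κ)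
    {ν : P ⥤ Q} {lam : Q ⥤ N'} (hd₂ : IsCanonicalDecomp (κ ⋙ ψ) ν lam)
    {ρ : M ⥤ R} {σ : R ⥤ N'} (hd₃ : IsCanonicalDecomp (φ ⋙ ψ) ρ σ) :
    PairEquiv ρ σ (μ ⋙ ν) lam :=
  hd₃.pairEquiv (hd₁.comp hd₂ hM hN hψ)

/-- for a contraction `κ` and mergers `μ₁, μ₂`, one has
`(μ₂ ∘ μ₁) ∘ κ = μ₂ ∘ (μ₁ ∘ κ)` in `NGr`: the canonical merger–contraction
decomposition `(ρ, σ)` of the admissible epi-functor `(μ₂ ∘ μ₁) ∘ κ` coincides (up to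
shifting an isomorphism) with the pair obtained by first canonically decomposing
`μ₁ ∘ κ` as `κ'' ∘ μ'` and then canonically decomposing `μ₂ ∘ κ''` as `lam ∘ ν`,
namely with the pair `(μ' ⋙ ν, lam)`. -/
theorem merger_merger_contraction_assoc {M N₁ N₂ N₃ P Q R : Type u}
    [Category.{v} M] [Category.{v} N₁] [Category.{v} N₂] [Category.{v} N₃]
    [Category.{v} P] [Category.{v} Q] [Category.{v} R]
    (hM : IsNestedGraph M) (h₁ : IsNestedGraph N₁) (h₂ : IsNestedGraph N₂)
    (h₃ : IsNestedGraph N₃) (hP : IsNestedGraph P) (hQ : IsNestedGraph Q)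
    (hR : IsNestedGraph R)
    (κ : M ⥤ N₁) (μ₁ : N₁ ⥤ N₂) (μ₂ : N₂ ⥤ N₃)
    (hκ : IsContraction κ) (hμ₁ : IsMerger μ₁) (hμ₂ : IsMerger μ₂)
    (μ' : M ⥤ P) (κ'' : P ⥤ N₂) (hd₁ : IsCanonicalDecomp (κ ⋙ μ₁) μ' κ'')
    (ν : P ⥤ Q) (lam : Q ⥤ N₃) (hd₂ : IsCanonicalDecomp (κ'' ⋙ μ₂) ν lam)
    (ρ : M ⥤ R) (σ : R ⥤ N₃) (hd₃ : IsCanonicalDecomp (κ ⋙ (μ₁ ⋙ μ₂)) ρ σ) :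
    PairEquiv ρ σ (μ' ⋙ ν) lam :=
  merger_merger_contraction_assoc_general hM.identitiesIndecomposable h₂.identitiesIndecomposable
    (hμ₂.reflectsIdentities h₂.identitiesIndecomposable) hd₁ hd₂ hd₃
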